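/- Let S* be a canonical optimal schedule for the index order, let R_x = [τ_x, τ_{x+1}) be a region of S*, let J_x = {j | S_j ∈ R_x}, and let j_x be the largest-indexed job in J_x attaining Δ_x = max_{j ∈ J_x}(e_max^j + ∑_{j' < j} w_{j'}). Suppose k ∈ {1,…,K} is such that I_k is partially utilized (at least one but not all slots of I_k are utilized) and the utilized slots of I_k lie in R_x. Then either (i) I_k is the last interval of R_x, i.e., τ_{x+1} ≤ s_{k+1}, or (ii) j_x is the largest-indexed job having a slot in I_k and e_k = e_max^{j_x}. -/

import Mathlib

open Finset

/-- A schedule: assigns to each unit time slot `[t,t+1)` at most one job;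
each job `j` receives exactly `p j` slots, and no slot at or beyond the horizon `D` is used. -/
structure Schedule (n : ℕ) (p : Fin n → ℕ) (D : ℕ) where
  assign : ℕ → Option (Fin n)
  card_slots : ∀ j : Fin n,
    ((Finset.range D).filter (fun t => assign t = some j)).card = p j
  beyond : ∀ t, D ≤ t → assign t = none

variable {n D : ℕ} {p : Fin n → ℕ}

/-- The set of time slots assigned to job `j`. -/
def jobSlots (S : Schedule n p D) (j : Fin n) : Finset ℕ :=
  (Finset.range D).filter (fun t => S.assign t = some j)

/-- The start time of job `j`: the least `t` with `S.assign t = some j`. -/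
noncomputable def startTime (S : Schedule n p D) (j : Fin n) : ℕ :=
  sInf {t | S.assign t = some j}

/-- The completion time of job `j`: one plus the greatest `t` with `S.assign t = some j`. -/
def completion (S : Schedule n p D) (j : Fin n) : ℕ :=
  (jobSlots S j).sup id + 1

/-- The utilization cost of a schedule: total tariff of all utilized slots. -/
def ucost (e : ℕ → ℚ) (S : Schedule n p D) : ℚ :=
  ∑ t ∈ (Finset.range D).filter (fun t => S.assign t ≠ none), e t

/-- The weighted total cost: `∑_j w_j C_j(S) + E(S)`. -/
def wcost (w : Fin n → ℚ) (e : ℕ → ℚ) (S : Schedule n p D) : ℚ :=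
  (∑ j : Fin n, w j * (completion S j : ℚ)) + ucost e S

/-- `S` processes jobs in the order of their indices: every slot of a smaller-indexed
job precedes every slot of a larger-indexed job. -/
def RespectsOrder (S : Schedule n p D) : Prop :=
  ∀ j k : Fin n, j < k → ∀ t t', S.assign t = some j → S.assign t' = some k → t < t'

/-- The tie-breaking value `∑_{t utilized} t`. -/
def tieVal (S : Schedule n p D) : ℕ :=
  ∑ t ∈ (Finset.range D).filter (fun t => S.assign t ≠ none), t

/-- Membership in the set `P = (⋃_k {s_k, s_k+1}) ∪ {D}` of potential split points,
for boundaries `σ : Fin (K+1) → ℕ` (0-based: interval `k` is `[σ k.castSucc, σ k.succ)`). -/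
def inP (K : ℕ) (σ : Fin (K+1) → ℕ) (D t : ℕ) : Prop :=
  (∃ k : Fin K, t = σ k.castSucc ∨ t = σ k.castSucc + 1) ∨ t = D

/-- `t` is a split point of `S`: `t ∈ P` and every job starting before `t` completes by `t`. -/
def IsSplit (K : ℕ) (σ : Fin (K+1) → ℕ) (S : Schedule n p D) (t : ℕ) : Prop :=
  inP K σ D t ∧ ∀ j : Fin n, startTime S j < t ↔ completion S j ≤ t

/-- `e_max^j`: the maximum tariff among the slots assigned to job `j`. -/
def emax (e : ℕ → ℚ) (S : Schedule n p D) (j : Fin n) : ℚ :=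
  WithBot.unbotD 0 (((jobSlots S j).image e).max)

/-- The quantity `e_max^j + ∑_{j' < j} w_{j'}` whose maximum over a region defines `Δ_x`. -/
def dval (w : Fin n → ℚ) (e : ℕ → ℚ) (S : Schedule n p D) (j : Fin n) : ℚ :=
  emax e S j + ∑ j' ∈ Finset.univ.filter (fun j' => j' < j), w j'

open Schedule

/-!
An order-respecting schedule is determined by its utilized slots. Replacing a utilized slot by an
idle one shifts every job slot in between to a neighbouring utilized slot, so optimality, together
with the tie-breaking rule, bounds tariff differences by the weights of the jobs that complete in
between.

If `I_k` ends strictly inside the region, its right end is not a split point, hence some job `j`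
crosses it, and `j` has a slot in `I_k` before an idle one. Exchanging slots with that idle slot
gives `e_max^j = e_k`, shows that later jobs have a smaller `dval` than `j`, and shows that earlier
jobs of the region have no larger `dval`: between split points every job completion is followed
by a utilized slot, so earlier jobs can be delayed by one unit each. Therefore `j = j_x`.
-/

theorem exists_slide_down {α : Type*} [LinearOrder α] {U : Finset α} {s t : α}
    (hs : s ∉ U) (ht : t ∈ U) (hst : s < t) :
    ∃ f : α → α, StrictMonoOn f U ∧ U.image f = insert s (U.erase t) ∧
      (∀ x ∉ Set.Ioc s t, f x = x) ∧
      ∀ x ∈ Set.Ioc s t, IsGreatest {y | y ∈ insert s U ∧ y < x} (f x) := by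
  classical
  have exists_pred : ∀ x ∈ Set.Ioc s t, ∃ y, IsGreatest {y | y ∈ insert s U ∧ y < x} y := by
    intro x hx
    have hne : ((insert s U).filter (· < x)).Nonempty := ⟨s, by simp [hx.1]⟩
    exact ⟨_, by simpa only [coe_filter] using isGreatest_max' _ hne⟩
  choose! pred hpred using exists_pred
  set f : α → α := fun x => if x ∈ Set.Ioc s t then pred x else x
  have f_out : ∀ x ∉ Set.Ioc s t, f x = x := fun x hx => if_neg hx
  have f_in : ∀ x ∈ Set.Ioc s t, IsGreatest {y | y ∈ insert s U ∧ y < x} (f x) :=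
    fun x hx => by simpa only [f, if_pos hx] using hpred x hx
  have f_le : ∀ x, f x ≤ x := by
    intro x
    by_cases hx : x ∈ Set.Ioc s t
    · exact (f_in x hx).1.2.le
    · exact (f_out x hx).le
  have f_strictMonoOn : StrictMonoOn f U := by
    intro x hx y _ hxy
    by_cases hy' : y ∈ Set.Ioc s t
    · have x_le : x ≤ f y := (f_in y hy').2 ⟨mem_insert_of_mem hx, hxy⟩
      by_cases hx' : x ∈ Set.Ioc s t
      · exact (f_in x hx').1.2.trans_le x_le
      · have x_ne : x ≠ f y := by
          rintro rfl
          have s_le : s ≤ f y := (f_in y hy').2 ⟨mem_insert_self s U, hy'.1⟩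
          exact hx' ⟨s_le.lt_of_ne fun h => hs (h ▸ hx), hxy.le.trans hy'.2⟩
        rw [f_out x hx']
        exact x_le.lt_of_ne x_ne
    · rw [f_out y hy']
      exact (f_le x).trans_lt hxy
  refine ⟨f, f_strictMonoOn, eq_of_subset_of_card_le (fun y hy => ?_) ?_, f_out, f_in⟩
  · obtain ⟨x, hx, rfl⟩ := mem_image.1 hy
    by_cases hx' : x ∈ Set.Ioc s t
    · obtain ⟨f_mem, f_lt⟩ := (f_in x hx').1
      have := (f_lt.trans_le hx'.2).ne
      simp_all
    · have : x ≠ t := by rintro rfl; exact hx' ⟨hst, le_rfl⟩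
      simp_all
  · rw [card_insert_of_notMem (fun h => hs (mem_of_mem_erase h)), card_erase_add_one ht,
      card_image_of_injOn f_strictMonoOn.injOn]

theorem exists_slide_up {α : Type*} [LinearOrder α] {U : Finset α} {s t : α}
    (hs : s ∉ U) (ht : t ∈ U) (hts : t < s) :
    ∃ f : α → α, StrictMonoOn f U ∧ U.image f = insert s (U.erase t) ∧
      (∀ x ∉ Set.Ico t s, f x = x) ∧
      ∀ x ∈ Set.Ico t s, IsLeast {y | y ∈ insert s U ∧ x < y} (f x) := by
  obtain ⟨f, f_mono, f_image, f_out, f_in⟩ := exists_slide_down (α := αᵒᵈ) hs ht hts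
  exact ⟨f, fun x hx y hy hxy => f_mono hy hx hxy, f_image,
    fun x hx => f_out x fun h => hx h.symm, fun x hx => f_in x hx.symm⟩

theorem sum_filter_lt_add_sum_Ico {ι M : Type*} [LinearOrder ι] [Fintype ι]
    [LocallyFiniteOrder ι] [AddCommMonoid M] (f : ι → M) {j k : ι} (hjk : j ≤ k) :
    ∑ i with i < j, f i + ∑ i ∈ Ico j k, f i = ∑ i with i < k, f i := by
  rw [← sum_union]
  · congr 1
    ext i
    simp only [mem_union, mem_filter_univ, mem_Ico]
    exact ⟨fun h => h.elim (·.trans_le hjk) (·.2), fun h => (lt_or_ge i j).imp_right (⟨·, h⟩)⟩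
  · exact disjoint_left.2 fun i hi hi' =>
      (mem_Ico.1 hi').1.not_gt ((mem_filter_univ i).1 hi)

namespace Schedule

/-- The set of utilized slots, the index set of the sums in `ucost` and `tieVal`. -/
def utilized (S : Schedule n p D) : Finset ℕ :=
  (range D).filter fun t => S.assign t ≠ none

variable {S : Schedule n p D} {j k : Fin n} {t : ℕ}

theorem lt_horizon (h : S.assign t ≠ none) : t < D :=
  not_le.1 fun hDt => h (S.beyond t hDt)

theorem assign_ne_none (h : S.assign t = some j) : S.assign t ≠ none := by
  simp [h]

theorem mem_utilized : t ∈ S.utilized ↔ S.assign t ≠ none := by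
  simpa [utilized] using fun h => lt_horizon h

theorem mem_jobSlots : t ∈ jobSlots S j ↔ S.assign t = some j := by
  simpa [jobSlots] using fun h => lt_horizon (assign_ne_none h)

theorem startTime_le (h : S.assign t = some j) : startTime S j ≤ t :=
  Nat.sInf_le h

theorem lt_completion (h : S.assign t = some j) : t < completion S j :=
  Nat.lt_succ_of_le (le_sup (f := id) (mem_jobSlots.2 h))

theorem exists_assign_add_one_eq_completion (hp : ∀ j, 1 ≤ p j) (S : Schedule n p D)
    (j : Fin n) : ∃ t, S.assign t = some j ∧ t + 1 = completion S j := by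
  have hne : (jobSlots S j).Nonempty := card_pos.1 ((hp j).trans_eq (S.card_slots j).symm)
  obtain ⟨t, ht, h⟩ := exists_mem_eq_sup _ hne (id : ℕ → ℕ)
  exact ⟨t, mem_jobSlots.1 ht, congrArg (· + 1) h.symm⟩

theorem lt_horizon_of_lt_completion (hp : ∀ j, 1 ≤ p j) (h : t < completion S j) : t < D := by
  obtain ⟨u, hu, huj⟩ := exists_assign_add_one_eq_completion hp S j
  have := lt_horizon (assign_ne_none hu)
  lia

theorem assign_startTime (hp : ∀ j, 1 ≤ p j) (S : Schedule n p D) (j : Fin n) :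
    S.assign (startTime S j) = some j :=
  have ⟨t, ht, _⟩ := exists_assign_add_one_eq_completion hp S j
  Nat.sInf_mem (s := {t | S.assign t = some j}) ⟨t, ht⟩

theorem exists_assign_tariff_eq_emax (hp : ∀ j, 1 ≤ p j) (e : ℕ → ℚ) (S : Schedule n p D)
    (j : Fin n) : ∃ t, S.assign t = some j ∧ e t = emax e S j := by
  obtain ⟨u, hu, _⟩ := exists_assign_add_one_eq_completion hp S j
  obtain ⟨q, hq⟩ := max_of_mem (mem_image_of_mem e (mem_jobSlots.2 hu))
  obtain ⟨t, ht, rfl⟩ := mem_image.1 (mem_of_max hq)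
  exact ⟨t, mem_jobSlots.1 ht, by simp [emax, hq]⟩

theorem tariff_le_emax (e : ℕ → ℚ) (h : S.assign t = some j) : e t ≤ emax e S j := by
  have mem : e t ∈ (jobSlots S j).image e := mem_image_of_mem e (mem_jobSlots.2 h)
  obtain ⟨q, hq⟩ := max_of_mem mem
  simpa [emax, hq] using le_max_of_eq mem hq

end Schedule

section Partition

variable {K : ℕ} {σ : Fin (K + 1) → ℕ} {S : Schedule n p D} {t : ℕ}

theorem inP_boundary (hσD : σ (Fin.last K) = D) (m : Fin (K + 1)) : inP K σ D (σ m) := by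
  rcases m.eq_castSucc_or_eq_last with ⟨q, rfl⟩ | rfl
  · exact Or.inl ⟨q, Or.inl rfl⟩
  · exact Or.inr hσD

theorem exists_interval (hσ0 : σ 0 = 0) (hσD : σ (Fin.last K) = D) (ht : t < D) :
    ∃ q : Fin K, σ q.castSucc ≤ t ∧ t < σ q.succ := by
  by_contra! h
  have boundary_le (m : Fin (K + 1)) : σ m ≤ t :=
    Fin.induction (by simp [hσ0]) h m
  exact (boundary_le (Fin.last K)).not_gt (hσD ▸ ht)

theorem exists_crossing_of_not_isSplit (hp : ∀ j, 1 ≤ p j) (ht : inP K σ D t)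
    (hsplit : ¬IsSplit K σ S t) : ∃ j, startTime S j < t ∧ t < completion S j := by
  by_contra! h
  exact hsplit ⟨ht, fun j => ⟨h j, (lt_completion (assign_startTime hp S j)).trans_le⟩⟩

theorem IsSplit.le_startTime {j : Fin n} {u : ℕ} (ht : IsSplit K σ S t) (htu : t ≤ u)
    (hu : S.assign u = some j) : t ≤ startTime S j :=
  not_lt.1 fun h => (((ht.2 j).1 h).trans htu).not_gt (lt_completion hu)

end Partition

namespace RespectsOrder

variable {S : Schedule n p D} {j k : Fin n} {t : ℕ}

theorem completion_le_startTime (hS : RespectsOrder S) (hp : ∀ j, 1 ≤ p j) (hjk : j < k) :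
    completion S j ≤ startTime S k := by
  obtain ⟨t, ht, h⟩ := exists_assign_add_one_eq_completion hp S j
  exact h ▸ hS j k hjk t _ ht (assign_startTime hp S k)

theorem strictMono_completion (hS : RespectsOrder S) (hp : ∀ j, 1 ≤ p j) :
    StrictMono (completion S) := fun _ k hjk =>
  (hS.completion_le_startTime hp hjk).trans_lt (lt_completion (assign_startTime hp S k))

theorem le_of_lt_completion (hS : RespectsOrder S) (hp : ∀ j, 1 ≤ p j)
    (hk : S.assign t = some k) (ht : t < completion S j) : k ≤ j :=
  not_lt.1 fun hjk =>
    ((hS.completion_le_startTime hp hjk).trans (startTime_le hk)).not_gt ht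

theorem exists_slot_of_crossing (hS : RespectsOrder S) (hp : ∀ j, 1 ≤ p j) {r s u : ℕ}
    (hstart : startTime S j < s) (hcompl : s < completion S j)
    (hru : r ≤ u) (hus : u < s) (hu : S.assign u ≠ none) :
    ∃ t, r ≤ t ∧ t < s ∧ S.assign t = some j := by
  obtain ⟨k, hk⟩ := Option.ne_none_iff_exists'.1 hu
  rcases (hS.le_of_lt_completion hp hk (hus.trans hcompl)).eq_or_lt with rfl | hkj
  · exact ⟨u, hru, hus, hk⟩
  · have u_lt := (lt_completion hk).trans_le (hS.completion_le_startTime hp hkj)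
    exact ⟨startTime S j, hru.trans u_lt.le, hstart, assign_startTime hp S j⟩

end RespectsOrder

/-- `S'` processes in slot `f t` what `S` processes in slot `t`, and nothing else. -/
def IsRelocation (f : ℕ → ℕ) (S S' : Schedule n p D) : Prop :=
  ∀ x j, S'.assign x = some j ↔ ∃ t, S.assign t = some j ∧ f t = x

theorem exists_isRelocation {S : Schedule n p D} {f : ℕ → ℕ} (hf : Set.InjOn f S.utilized)
    (hfD : ∀ t ∈ S.utilized, f t < D) : ∃ S' : Schedule n p D, IsRelocation f S S' := by
  classical
  let assign' (x : ℕ) : Option (Fin n) :=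
    if h : ∃ t ∈ S.utilized, f t = x then S.assign h.choose else none
  have mem (t j) (h : S.assign t = some j) : t ∈ S.utilized :=
    mem_utilized.2 (assign_ne_none h)
  have assign'_eq_some_iff (x j) : assign' x = some j ↔ ∃ t, S.assign t = some j ∧ f t = x := by
    by_cases h : ∃ t ∈ S.utilized, f t = x
    · have assign'_eq : assign' x = S.assign h.choose := dif_pos h
      obtain ⟨mem_choose, f_choose⟩ := h.choose_spec
      rw [assign'_eq]
      refine ⟨fun hj => ⟨_, hj, f_choose⟩, fun ⟨t, ht, htx⟩ => ?_⟩
      rwa [hf mem_choose (mem t j ht) (f_choose.trans htx.symm)]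
    · have assign'_eq : assign' x = none := dif_neg h
      rw [assign'_eq]
      exact iff_of_false (by simp) fun ⟨t, ht, htx⟩ => h ⟨t, mem t j ht, htx⟩
  refine ⟨⟨assign', fun j => ?_, fun x hx => dif_neg ?_⟩, assign'_eq_some_iff⟩
  · have slots_eq : {x ∈ range D | assign' x = some j} = (jobSlots S j).image f := by
      ext x
      simp only [mem_filter, mem_range, assign'_eq_some_iff, mem_image, mem_jobSlots,
        and_iff_right_iff_imp]
      rintro ⟨t, ht, rfl⟩
      exact hfD t (mem t j ht)
    rw [slots_eq, card_image_of_injOn, jobSlots, S.card_slots]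
    exact hf.mono fun t ht => mem t j (mem_jobSlots.1 ht)
  · rintro ⟨t, ht, rfl⟩
    exact (hfD t ht).not_ge hx

namespace IsRelocation

variable {S S' : Schedule n p D} {f : ℕ → ℕ}

theorem utilized_eq (h : IsRelocation f S S') : S'.utilized = S.utilized.image f := by
  ext x
  simp only [mem_utilized, mem_image, Option.ne_none_iff_exists', h x]
  tauto

theorem respectsOrder (h : IsRelocation f S S') (hf : StrictMonoOn f S.utilized)
    (hS : RespectsOrder S) : RespectsOrder S' := by
  intro j k hjk x y hx hy
  obtain ⟨t, ht, rfl⟩ := (h x j).1 hx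
  obtain ⟨u, hu, rfl⟩ := (h y k).1 hy
  exact hf (mem_utilized.2 (assign_ne_none ht)) (mem_utilized.2 (assign_ne_none hu))
    (hS j k hjk t u ht hu)

theorem completion_eq (h : IsRelocation f S S') (hf : StrictMonoOn f S.utilized) {j : Fin n}
    {t : ℕ} (ht : S.assign t = some j) (htj : t + 1 = completion S j) :
    completion S' j = f t + 1 := by
  refine congrArg (· + 1) (le_antisymm (Finset.sup_le fun x hx => ?_) ?_)
  · obtain ⟨u, hu, rfl⟩ := (h x j).1 (mem_jobSlots.1 hx)
    have u_le : u ≤ t := Nat.le_of_lt_succ ((lt_completion hu).trans_eq htj.symm)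
    exact hf.monotoneOn (mem_utilized.2 (assign_ne_none hu))
      (mem_utilized.2 (assign_ne_none ht)) u_le
  · exact le_sup (f := id) (mem_jobSlots.2 ((h _ j).2 ⟨t, ht, rfl⟩))

end IsRelocation

section Exchange

variable {S S' : Schedule n p D} {s t : ℕ}

theorem sum_utilized_exchange {M : Type*} [AddCommGroup M] (f : ℕ → M) (hs : s ∉ S.utilized)
    (ht : t ∈ S.utilized) (h : S'.utilized = insert s (S.utilized.erase t)) :
    ∑ x ∈ S'.utilized, f x = ∑ x ∈ S.utilized, f x + (f s - f t) := by
  rw [h, sum_insert (fun hs' => hs (mem_of_mem_erase hs')), sum_erase_eq_sub ht]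
  abel

theorem wcost_exchange (w : Fin n → ℚ) (e : ℕ → ℚ) (hs : s ∉ S.utilized)
    (ht : t ∈ S.utilized) (h : S'.utilized = insert s (S.utilized.erase t)) :
    wcost w e S' = wcost w e S +
      (∑ j, w j * ((completion S' j : ℚ) - completion S j) + (e s - e t)) := by
  have ucost_eq : ucost e S' = ucost e S + (e s - e t) := sum_utilized_exchange e hs ht h
  simp only [wcost, ucost_eq, mul_sub, sum_sub_distrib]
  ring

theorem tieVal_exchange (hs : s ∉ S.utilized) (ht : t ∈ S.utilized)
    (h : S'.utilized = insert s (S.utilized.erase t)) : tieVal S' + t = tieVal S + s := by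
  have tieVal_eq (S : Schedule n p D) : (tieVal S : ℤ) = ∑ x ∈ S.utilized, (x : ℤ) :=
    Nat.cast_sum _ _
  zify
  rw [tieVal_eq, tieVal_eq, sum_utilized_exchange (fun x => (x : ℤ)) hs ht h]
  ring

end Exchange

/-- `S` is a canonical optimal schedule for the index order: it minimizes the total cost among
the order-respecting schedules and, among the minimizers, the tie-breaking value. -/
structure IsCanonicalOptimal (w : Fin n → ℚ) (e : ℕ → ℚ) (S : Schedule n p D) : Prop where
  respectsOrder : RespectsOrder S
  wcost_le : ∀ S' : Schedule n p D, RespectsOrder S' → wcost w e S ≤ wcost w e S'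
  tieVal_le : ∀ S' : Schedule n p D, RespectsOrder S' → wcost w e S' = wcost w e S →
    tieVal S ≤ tieVal S'

namespace IsCanonicalOptimal

variable {w : Fin n → ℚ} {e : ℕ → ℚ} {S S' : Schedule n p D} {j k : Fin n} {s t : ℕ}

theorem wcost_lt_of_tieVal_lt (hS : IsCanonicalOptimal w e S) (hS' : RespectsOrder S')
    (h : tieVal S' < tieVal S) : wcost w e S < wcost w e S' :=
  (hS.wcost_le S' hS').lt_of_ne fun heq => (hS.tieVal_le S' hS' heq.symm).not_gt h

theorem tariff_le_of_slide (hS : IsCanonicalOptimal w e S) (hp : ∀ j, 1 ≤ p j)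
    (hw : ∀ j, 0 ≤ w j) (hs : s ∉ S.utilized) (hsD : s < D) (ht : t ∈ S.utilized)
    {f : ℕ → ℕ} (hf : StrictMonoOn f S.utilized)
    (hf_image : S.utilized.image f = insert s (S.utilized.erase t)) {d : Fin n → ℚ}
    (hd : ∀ i u, S.assign u = some i → u + 1 = completion S i → (f u : ℚ) ≤ u + d i) :
    e t ≤ e s + ∑ i, w i * d i ∧ (s < t → e t < e s + ∑ i, w i * d i) := by
  have f_lt_horizon : ∀ x ∈ S.utilized, f x < D := by
    intro x hx
    have f_mem : f x ∈ insert s (S.utilized.erase t) := hf_image ▸ mem_image_of_mem f hx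
    rcases mem_insert.1 f_mem with h | h
    · exact h ▸ hsD
    · exact lt_horizon (mem_utilized.1 (mem_of_mem_erase h))
  obtain ⟨S', hS'⟩ := exists_isRelocation hf.injOn f_lt_horizon
  have order' := hS'.respectsOrder hf hS.respectsOrder
  have utilized_eq := hS'.utilized_eq.trans hf_image
  have wcost_eq := wcost_exchange w e hs ht utilized_eq
  have delay_le : ∑ i, w i * ((completion S' i : ℚ) - completion S i) ≤ ∑ i, w i * d i := by
    refine sum_le_sum fun i _ => mul_le_mul_of_nonneg_left ?_ (hw i)
    obtain ⟨u, hu, hui⟩ := exists_assign_add_one_eq_completion hp S i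
    rw [hS'.completion_eq hf hu hui, ← hui]
    push_cast
    linarith [hd i u hu hui]
  refine ⟨by linarith [hS.wcost_le S' order'], fun hst => ?_⟩
  have tieVal_lt : tieVal S' < tieVal S := by
    have := tieVal_exchange hs ht utilized_eq
    lia
  linarith [hS.wcost_lt_of_tieVal_lt order' tieVal_lt]

theorem tariff_add_sum_lt_of_idle (hS : IsCanonicalOptimal w e S) (hp : ∀ j, 1 ≤ p j)
    (hw : ∀ j, 0 ≤ w j) (hs : S.assign s = none) (hst : s < t) (ht : S.assign t ≠ none) :
    e t + ∑ i with s < completion S i ∧ completion S i ≤ t, w i < e s := by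
  have s_notMem : s ∉ S.utilized := by simp [mem_utilized, hs]
  obtain ⟨f, f_mono, f_image, f_out, f_in⟩ :=
    exists_slide_down s_notMem (mem_utilized.2 ht) hst
  have advance : ∀ i u, S.assign u = some i → u + 1 = completion S i → (f u : ℚ) ≤
      u + if s < completion S i ∧ completion S i ≤ t then -1 else 0 := by
    intro i u hu hui
    have u_ne : u ≠ s := by rintro rfl; simp [hs] at hu
    have f_le : f u ≤ u ∧ (s < completion S i ∧ completion S i ≤ t → f u + 1 ≤ u) := by
      by_cases h : u ∈ Set.Ioc s t
      · have := (f_in u h).1.2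
        lia
      · rw [f_out u h]
        rw [Set.mem_Ioc] at h
        lia
    split_ifs with h
    · have : (f u : ℚ) + 1 ≤ u := mod_cast f_le.2 h
      linarith
    · simpa using f_le.1
  have tariff_lt := (hS.tariff_le_of_slide hp hw s_notMem (hst.trans (lt_horizon ht))
    (mem_utilized.2 ht) f_mono f_image advance).2 hst
  simp only [mul_ite, mul_neg, mul_one, mul_zero, ← sum_filter, sum_neg_distrib] at tariff_lt
  linarith

theorem tariff_lt_of_idle (hS : IsCanonicalOptimal w e S) (hp : ∀ j, 1 ≤ p j)
    (hw : ∀ j, 0 ≤ w j) (hs : S.assign s = none) (hst : s < t) (ht : S.assign t ≠ none) :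
    e t < e s :=
  (le_add_of_nonneg_right (sum_nonneg fun i _ => hw i)).trans_lt
    (hS.tariff_add_sum_lt_of_idle hp hw hs hst ht)

-- The last slot of a job moves to the next utilized slot, hence to the one right after it when
-- that slot is utilized or is the idle slot being filled.
theorem tariff_le_add_sum_of_idle (hS : IsCanonicalOptimal w e S) (hp : ∀ j, 1 ≤ p j)
    (hw : ∀ j, 0 ≤ w j) (hs : S.assign s = none) (hsD : s < D) (hts : t < s)
    (ht : S.assign t ≠ none)
    (hnext : ∀ i, t < completion S i → completion S i < s → S.assign (completion S i) ≠ none) :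
    e t ≤ e s + ∑ i with t < completion S i ∧ completion S i ≤ s, w i := by
  have s_notMem : s ∉ S.utilized := by simp [mem_utilized, hs]
  obtain ⟨f, f_mono, f_image, f_out, f_in⟩ := exists_slide_up s_notMem (mem_utilized.2 ht) hts
  have delay : ∀ i u, S.assign u = some i → u + 1 = completion S i → (f u : ℚ) ≤
      u + if t < completion S i ∧ completion S i ≤ s then 1 else 0 := by
    intro i u _ hui
    split_ifs with h
    · have next_mem : completion S i ∈ insert s S.utilized := by
        rw [mem_insert, mem_utilized]
        exact h.2.eq_or_lt.imp_right (hnext i h.1)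
      exact mod_cast hui ▸ (f_in u ⟨by lia, by lia⟩).2 ⟨next_mem, by lia⟩
    · rw [f_out u (by rw [Set.mem_Ico]; lia), add_zero]
  have tariff_le := (hS.tariff_le_of_slide hp hw s_notMem hsD
    (mem_utilized.2 ht) f_mono f_image delay).1
  simpa only [mul_ite, mul_one, mul_zero, ← sum_filter] using tariff_le

theorem emax_le_of_idle (hS : IsCanonicalOptimal w e S) (hp : ∀ j, 1 ≤ p j)
    (hw : ∀ j, 0 ≤ w j) (hs : S.assign s = none) (hsj : s < completion S j) :
    emax e S j ≤ e s := by
  obtain ⟨t, ht, emax_eq⟩ := exists_assign_tariff_eq_emax hp e S j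
  rw [← emax_eq]
  rcases lt_or_ge s t with hst | hts
  · exact (hS.tariff_lt_of_idle hp hw hs hst (assign_ne_none ht)).le
  have hts : t < s := hts.lt_of_ne (by rintro rfl; simp [hs] at ht)
  have lt_completion_of_lt (i) (hti : t < completion S i) : s < completion S i :=
    hsj.trans_le <| (hS.respectsOrder.strictMono_completion hp).monotone <|
      hS.respectsOrder.le_of_lt_completion hp ht hti
  have exchange := hS.tariff_le_add_sum_of_idle hp hw hs (lt_horizon_of_lt_completion hp hsj) hts
    (assign_ne_none ht) fun i hti his => absurd (lt_completion_of_lt i hti) his.not_gt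
  rwa [filter_false_of_mem fun i _ h => (lt_completion_of_lt i h.1).not_ge h.2, sum_empty,
    add_zero] at exchange

theorem dval_lt_dval_of_idle (hS : IsCanonicalOptimal w e S) (hp : ∀ j, 1 ≤ p j)
    (hw : ∀ j, 0 ≤ w j) (hs : S.assign s = none) (hsj : s < completion S j)
    (hes : e s ≤ emax e S j) (hjk : j < k) : dval w e S k < dval w e S j := by
  obtain ⟨t, ht, emax_eq⟩ := exists_assign_tariff_eq_emax hp e S k
  have completion_le : completion S j ≤ t :=
    (hS.respectsOrder.completion_le_startTime hp hjk).trans (startTime_le ht)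
  have sum_le : ∑ i ∈ Ico j k, w i ≤ ∑ i with s < completion S i ∧ completion S i ≤ t, w i := by
    refine sum_le_sum_of_subset_of_nonneg (fun i hi => ?_) fun i _ _ => hw i
    obtain ⟨hji, hik⟩ := mem_Ico.1 hi
    exact (mem_filter_univ i).2
      ⟨hsj.trans_le ((hS.respectsOrder.strictMono_completion hp).monotone hji),
        (hS.respectsOrder.completion_le_startTime hp hik).trans (startTime_le ht)⟩
  have exchange := hS.tariff_add_sum_lt_of_idle hp hw hs (hsj.trans_le completion_le)
    (assign_ne_none ht)
  rw [dval, dval, ← emax_eq, ← sum_filter_lt_add_sum_Ico w hjk.le]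
  linarith

theorem dval_le_dval_of_idle (hS : IsCanonicalOptimal w e S) (hp : ∀ j, 1 ≤ p j)
    (hw : ∀ j, 0 ≤ w j) (hs : S.assign s = none) (hsk : s < completion S k)
    (hes : e s ≤ emax e S k) (hjk : j < k) (hjs : completion S j ≤ s)
    (hnext : ∀ i, j ≤ i → completion S i < s → S.assign (completion S i) ≠ none) :
    dval w e S j ≤ dval w e S k := by
  obtain ⟨t, ht, emax_eq⟩ := exists_assign_tariff_eq_emax hp e S j
  have le_of_lt (i) (hti : t < completion S i) : j ≤ i :=
    hS.respectsOrder.le_of_lt_completion hp ht hti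
  have sum_le : ∑ i with t < completion S i ∧ completion S i ≤ s, w i ≤ ∑ i ∈ Ico j k, w i := by
    refine sum_le_sum_of_subset_of_nonneg (fun i hi => ?_) fun i _ _ => hw i
    obtain ⟨hti, his⟩ := (mem_filter_univ i).1 hi
    exact mem_Ico.2 ⟨le_of_lt i hti,
      (hS.respectsOrder.strictMono_completion hp).lt_iff_lt.1 (his.trans_lt hsk)⟩
  have exchange := hS.tariff_le_add_sum_of_idle hp hw hs (lt_horizon_of_lt_completion hp hsk)
    ((lt_completion ht).trans_le hjs) (assign_ne_none ht) fun i hti => hnext i (le_of_lt i hti)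
  rw [dval, dval, ← emax_eq, ← sum_filter_lt_add_sum_Ico w hjk.le]
  linarith

variable {K : ℕ} {σ : Fin (K + 1) → ℕ} {ec : Fin K → ℚ} {a b : ℕ}

-- Were the slot idle, its interval would stay idle up to its end, which is then a split point.
theorem assign_completion_ne_none (hS : IsCanonicalOptimal w e S) (hp : ∀ j, 1 ≤ p j)
    (hw : ∀ j, 0 ≤ w j) (hσ0 : σ 0 = 0) (hσD : σ (Fin.last K) = D)
    (hconst : ∀ k : Fin K, ∀ t, σ k.castSucc ≤ t → t < σ k.succ → e t = ec k)
    (hcons : ∀ t, a < t → t < b → ¬IsSplit K σ S t) (haj : a < completion S j)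
    (hjt : completion S j ≤ t) (htb : t < b) (ht : S.assign t ≠ none) :
    S.assign (completion S j) ≠ none := by
  intro idle
  obtain ⟨q, q_le, lt_q⟩ := exists_interval hσ0 hσD (hjt.trans_lt (lt_horizon ht))
  have idle_of_mem (x) (hx : completion S j ≤ x) (hxq : x < σ q.succ) : S.assign x = none := by
    by_contra hne
    have lt_x : completion S j < x := hx.lt_of_ne (by rintro rfl; exact hne idle)
    have tariff_lt := hS.tariff_lt_of_idle hp hw idle lt_x hne
    rw [hconst q x (q_le.trans hx) hxq, hconst q _ q_le lt_q] at tariff_lt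
    exact tariff_lt.false
  have q_le_t : σ q.succ ≤ t := not_lt.1 fun h => ht (idle_of_mem t hjt h)
  obtain ⟨m, start_lt, lt_compl⟩ := exists_crossing_of_not_isSplit hp (inP_boundary hσD q.succ)
    (hcons _ (haj.trans lt_q) (q_le_t.trans_lt htb))
  have start_assigned := assign_startTime hp S m
  have start_lt' : startTime S m < completion S j := not_le.1 fun h =>
    assign_ne_none start_assigned (idle_of_mem _ h start_lt)
  have m_le : m ≤ j := hS.respectsOrder.le_of_lt_completion hp start_assigned start_lt'
  exact (lt_q.trans lt_compl).not_ge
    ((hS.respectsOrder.strictMono_completion hp).monotone m_le)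

theorem dval_le_dval_of_not_isSplit (hS : IsCanonicalOptimal w e S) (hp : ∀ j, 1 ≤ p j)
    (hw : ∀ j, 0 ≤ w j) (hσ0 : σ 0 = 0) (hσD : σ (Fin.last K) = D)
    (hconst : ∀ k : Fin K, ∀ t, σ k.castSucc ≤ t → t < σ k.succ → e t = ec k)
    (hcons : ∀ t, a < t → t < b → ¬IsSplit K σ S t) (hs : S.assign s = none)
    (hsk : s < completion S k) (hes : e s ≤ emax e S k) (hks : startTime S k < s)
    (hkb : startTime S k < b) (hjk : j < k) (haj : a ≤ startTime S j) :
    dval w e S j ≤ dval w e S k := by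
  have strictMono_completion := hS.respectsOrder.strictMono_completion hp
  refine hS.dval_le_dval_of_idle hp hw hs hsk hes hjk
    ((hS.respectsOrder.completion_le_startTime hp hjk).trans hks.le) fun i hji his => ?_
  have hik : i < k := strictMono_completion.lt_iff_lt.1 (his.trans hsk)
  have a_lt : a < completion S i := haj.trans_lt <|
    (lt_completion (assign_startTime hp S j)).trans_le (strictMono_completion.monotone hji)
  exact hS.assign_completion_ne_none hp hw hσ0 hσD hconst hcons a_lt
    (hS.respectsOrder.completion_le_startTime hp hik) hkb
    (assign_ne_none (assign_startTime hp S k))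

theorem emax_eq_of_crossing (hS : IsCanonicalOptimal w e S) (hp : ∀ j, 1 ≤ p j)
    (hw : ∀ j, 0 ≤ w j) {r q : ℕ} {c : ℚ} (hconst : ∀ t, r ≤ t → t < q → e t = c)
    (hstart : startTime S j < q) (hcompl : q < completion S j)
    (hused : ∃ t, r ≤ t ∧ t < q ∧ S.assign t ≠ none)
    (hidle : ∃ t, r ≤ t ∧ t < q ∧ S.assign t = none) :
    emax e S j = c ∧
      ∃ u s, r ≤ u ∧ u < s ∧ s < q ∧ S.assign u = some j ∧ S.assign s = none := by
  obtain ⟨v, hrv, hvq, hv⟩ := hused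
  obtain ⟨s, hrs, hsq, hs⟩ := hidle
  obtain ⟨u, hru, huq, hu⟩ :=
    hS.respectsOrder.exists_slot_of_crossing hp hstart hcompl hrv hvq hv
  have tariff_eq : e u = e s := (hconst u hru huq).trans (hconst s hrs hsq).symm
  refine ⟨le_antisymm ?_ ?_, u, s, hru, ?_, hsq, hu, hs⟩
  · exact hconst s hrs hsq ▸ hS.emax_le_of_idle hp hw hs (hsq.trans hcompl)
  · exact hconst u hru huq ▸ tariff_le_emax e hu
  · refine (not_lt.1 fun hsu => ?_).lt_of_ne (by rintro rfl; simp [hs] at hu)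
    exact (hS.tariff_lt_of_idle hp hw hs hsu (assign_ne_none hu)).ne tariff_eq

end IsCanonicalOptimal

theorem partial_interval_position_general {w : Fin n → ℚ} {e : ℕ → ℚ} {S : Schedule n p D}
    (hS : IsCanonicalOptimal w e S) (hp : ∀ j, 1 ≤ p j) (hw : ∀ j, 0 ≤ w j) {K : ℕ}
    {σ : Fin (K + 1) → ℕ} (hσ0 : σ 0 = 0) (hσD : σ (Fin.last K) = D) {ec : Fin K → ℚ}
    (hconst : ∀ k : Fin K, ∀ t, σ k.castSucc ≤ t → t < σ k.succ → e t = ec k) {a b : ℕ}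
    (hsa : IsSplit K σ S a) (hcons : ∀ t, a < t → t < b → ¬IsSplit K σ S t) {jx : Fin n}
    (hjx_start : a ≤ startTime S jx ∧ startTime S jx < b)
    (hjx_max : ∀ j, a ≤ startTime S j → startTime S j < b → dval w e S j ≤ dval w e S jx)
    (hjx_last : ∀ j, a ≤ startTime S j → startTime S j < b →
      dval w e S j = dval w e S jx → j ≤ jx)
    {k : Fin K} (hused : ∃ t, σ k.castSucc ≤ t ∧ t < σ k.succ ∧ S.assign t ≠ none)
    (hidle : ∃ t, σ k.castSucc ≤ t ∧ t < σ k.succ ∧ S.assign t = none)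
    (hin : ∀ t, σ k.castSucc ≤ t → t < σ k.succ → S.assign t ≠ none → a ≤ t ∧ t < b) :
    b ≤ σ k.succ ∨
      ((∃ t, σ k.castSucc ≤ t ∧ t < σ k.succ ∧ S.assign t = some jx) ∧
       (∀ j, (∃ t, σ k.castSucc ≤ t ∧ t < σ k.succ ∧ S.assign t = some j) → j ≤ jx) ∧
       ec k = emax e S jx) := by
  refine or_iff_not_imp_left.2 fun hb => ?_
  have ⟨v, k_le_v, v_lt, v_used⟩ := hused
  obtain ⟨j, j_start, j_compl⟩ := exists_crossing_of_not_isSplit hp (inP_boundary hσD k.succ)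
    (hcons _ ((hin v k_le_v v_lt v_used).1.trans_lt v_lt) (not_le.1 hb))
  obtain ⟨emax_eq, u, s, k_le_u, hus, s_lt, hu, hs⟩ :=
    hS.emax_eq_of_crossing hp hw (hconst k) j_start j_compl hused hidle
  have s_lt_compl : s < completion S j := s_lt.trans j_compl
  have tariff_le : e s ≤ emax e S j :=
    (hconst k s (k_le_u.trans hus.le) s_lt).trans_le emax_eq.ge
  have j_lt : startTime S j < b := j_start.trans (not_le.1 hb)
  have le_j : a ≤ startTime S j :=
    hsa.le_startTime (hin u k_le_u (hus.trans s_lt) (assign_ne_none hu)).1 hu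
  have dval_le := hjx_max j le_j j_lt
  obtain rfl : j = jx := by
    rcases lt_trichotomy j jx with hlt | heq | hgt
    · exact absurd (hS.dval_lt_dval_of_idle hp hw hs s_lt_compl tariff_le hlt) dval_le.not_gt
    · exact heq
    · have dval_ge := hS.dval_le_dval_of_not_isSplit hp hw hσ0 hσD hconst hcons hs s_lt_compl
        tariff_le ((startTime_le hu).trans_lt hus) j_lt hgt hjx_start.1
      exact absurd (hjx_last j le_j j_lt (dval_le.antisymm dval_ge)) hgt.not_ge
  exact ⟨⟨u, k_le_u, hus.trans s_lt, hu⟩, fun i ⟨t, _, t_lt, ht⟩ =>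
    hS.respectsOrder.le_of_lt_completion hp ht (t_lt.trans j_compl), emax_eq.symm⟩

/-- If `I_k` is partially utilized and its utilized slots lie in the region `[a, b)`,
then either `I_k` is the last interval of the region, or `j_x` is the largest-indexed
job with a slot in `I_k` and `e_k = e_max^(j_x)`. -/
theorem partial_interval_position (n : ℕ) (p : Fin n → ℕ) (hp : ∀ j, 1 ≤ p j)
    (w : Fin n → ℚ) (hw : ∀ j, 0 ≤ w j)
    (e : ℕ → ℚ) (he : ∀ t, 0 ≤ e t) (D : ℕ) (hD : ∑ j, p j ≤ D)
    (K : ℕ) (σ : Fin (K+1) → ℕ) (hσ0 : σ 0 = 0) (hσD : σ (Fin.last K) = D)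
    (hmono : StrictMono σ) (ec : Fin K → ℚ)
    (hconst : ∀ k : Fin K, ∀ t, σ k.castSucc ≤ t → t < σ k.succ → e t = ec k)
    (S : Schedule n p D) (hord : RespectsOrder S)
    (hopt : ∀ S' : Schedule n p D, RespectsOrder S' → wcost w e S ≤ wcost w e S')
    (htie : ∀ S' : Schedule n p D, RespectsOrder S' → wcost w e S' = wcost w e S →
      tieVal S ≤ tieVal S')
    (a b : ℕ) (hsa : IsSplit K σ S a) (hsb : IsSplit K σ S b) (hab : a < b)
    (hcons : ∀ t, a < t → t < b → ¬ IsSplit K σ S t)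
    (jx : Fin n) (hjx_start : a ≤ startTime S jx ∧ startTime S jx < b)
    (hjx_max : ∀ j : Fin n, a ≤ startTime S j → startTime S j < b →
      dval w e S j ≤ dval w e S jx)
    (hjx_last : ∀ j : Fin n, a ≤ startTime S j → startTime S j < b →
      dval w e S j = dval w e S jx → j ≤ jx)
    (k : Fin K)
    (hpart1 : ∃ t, σ k.castSucc ≤ t ∧ t < σ k.succ ∧ S.assign t ≠ none)
    (hpart2 : ∃ t, σ k.castSucc ≤ t ∧ t < σ k.succ ∧ S.assign t = none)
    (hin : ∀ t, σ k.castSucc ≤ t → t < σ k.succ → S.assign t ≠ none → a ≤ t ∧ t < b) :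
    b ≤ σ k.succ ∨
      ((∃ t, σ k.castSucc ≤ t ∧ t < σ k.succ ∧ S.assign t = some jx) ∧
       (∀ j : Fin n, (∃ t, σ k.castSucc ≤ t ∧ t < σ k.succ ∧ S.assign t = some j) → j ≤ jx) ∧
       ec k = emax e S jx) :=
  partial_interval_position_general ⟨hord, hopt, htie⟩ hp hw hσ0 hσD hconst hsa hcons hjx_start
    hjx_max hjx_last hpart1 hpart2 hin
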